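/- For every finite subset P* ⊆ Φ and every function f : P* → ℂ, there exist unique coefficients (c_{p'})_{p' ∈ P*} ∈ ℂ^{P*} such that Σ_{p' ∈ P*} c_{p'} φ_{p'}(p) = f(p) for all p ∈ P*; i.e., the piecewise-linear interpolant of f in the span of the hierarchical hat functions {φ_{p'}}_{p' ∈ P*} exists and is unique. -/

import Mathlib

/-- The one-dimensional sparse grid level sets: `Γ(n) = ∅` for `n < 0`, `Γ(0) = {0}`,
and `Γ(n) = {2^{1-n} j : j ∈ ℤ, |j| ≤ 2^{n-1}}` for `n ≥ 1`. -/
def sgLevel (n : ℤ) : Set ℝ :=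
  if n < 0 then ∅
  else if n = 0 then {0}
  else {x | ∃ j : ℤ, |j| ≤ 2 ^ (n - 1).toNat ∧ x = (2 : ℝ) ^ (1 - n) * (j : ℝ)}

/-- The tensor grid `Γ(𝐧) = Γ(n₁) × ⋯ × Γ(n_d)`. -/
def tensorGrid (d : ℕ) (nv : Fin d → ℤ) : Set (Fin d → ℝ) :=
  {x | ∀ k, x k ∈ sgLevel (nv k)}

/-- `Φ = ⋃_{𝐧 ∈ ℤ^d} Γ(𝐧)`. -/
def sgPoints (d : ℕ) : Set (Fin d → ℝ) :=
  ⋃ nv : Fin d → ℤ, tensorGrid d nv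

/-- The level of a coordinate: `lvl(t) = min {n ≥ 0 : t ∈ Γ(n)}`. -/
noncomputable def lvl (t : ℝ) : ℕ :=
  sInf {n : ℕ | t ∈ sgLevel (n : ℤ)}

/-- One-dimensional hat functions: `φ̂_{p,0} ≡ 1`, and for `n ≥ 1`,
`φ̂_{p,n}(x) = max(0, 1 - 2^{n-1}|x - p|)`. -/
def hat1 (p : ℝ) (n : ℕ) (x : ℝ) : ℝ :=
  if n = 0 then 1 else max 0 (1 - 2 ^ (n - 1) * |x - p|)

/-- The hierarchical hat function of `p ∈ Φ`: `φ_p(x) = Π_k φ̂_{p_k, n_k(p)}(x_k)`. -/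
noncomputable def hierHat (d : ℕ) (p x : Fin d → ℝ) : ℝ :=
  ∏ k, hat1 (p k) (lvl (p k)) (x k)

/-!
The grids `Γ(n)` are nested and the points of `Γ(n)` are spaced by `2^{1-n}`, so the hat function of
a point vanishes at every other point of its own level or below. In `d` dimensions `φ_q(p) = 0`
therefore holds whenever `p ≠ q` and the total level of `p` is at most that of `q`. Ordering the
points by total level makes the interpolation matrix `φ_q(p)` triangular with unit
diagonal, so its determinant is `1`.
-/

/-- The one-dimensional point set `⋃_{n ∈ ℤ} Γ(n)`, i.e. `Φ` for `d = 1` without the indexing by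
`Fin 1`. -/
def sgLine : Set ℝ :=
  ⋃ n : ℤ, sgLevel n

/-- The total level `|𝐧(p)|₁ = n₁(p) + ⋯ + n_d(p)` of a point, by which the interpolation matrix
is triangular. -/
noncomputable def totalLevel {d : ℕ} (p : Fin d → ℝ) : ℕ :=
  ∑ k, lvl (p k)

/-- The interpolation matrix of a finite point set: rows are indexed by evaluation points and
columns by hat functions. -/
noncomputable def hierHatMatrix {d : ℕ} (P : Finset (Fin d → ℝ)) : Matrix P P ℝ :=
  Matrix.of fun p q => hierHat d q p

section LinearAlgebra

open scoped Matrix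

variable {ι R : Type*} [Fintype ι] [DecidableEq ι] [CommRing R]

lemma det_eq_prod_diag_of_forall_le_eq_zero {α : Type*} [LinearOrder α] {M : Matrix ι ι R}
    (b : ι → α) (hM : ∀ i j, i ≠ j → b i ≤ b j → M i j = 0) : M.det = ∏ i, M i i := by
  have htri : Mᵀ.BlockTriangular b := fun i j hji => hM j i (ne_of_apply_ne b hji.ne) hji.le
  have hblock (a : α) :
      Mᵀ.toSquareBlock b a = Matrix.diagonal fun i : {i // b i = a} => M i i := by
    ext i j
    obtain rfl | hij := eq_or_ne i j
    · simp [Matrix.toSquareBlock_def]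
    · rw [Matrix.diagonal_apply_ne _ hij]
      exact hM j i (Subtype.coe_ne_coe.2 hij.symm) (j.2.trans i.2.symm).le
  calc M.det = ∏ a ∈ Finset.univ.image b, ∏ i : {i // b i = a}, M i i := by
        simp_rw [← M.det_transpose, htri.det, hblock, Matrix.det_diagonal]
    _ = ∏ a ∈ Finset.univ.image b, ∏ i with b i = a, M i i :=
        Finset.prod_congr rfl fun a _ => (Finset.prod_subtype _ (by simp) fun i => M i i).symm
    _ = ∏ i, M i i :=
        Finset.prod_fiberwise_of_maps_to (fun i hi => Finset.mem_image_of_mem b hi) _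

open scoped Matrix.Module in
lemma existsUnique_sum_smul_eq_of_isUnit_det {E : Type*} [AddCommGroup E] [Module R E]
    {M : Matrix ι ι R} (hM : IsUnit M.det) (f : ι → E) :
    ∃! c : ι → E, ∀ i, ∑ j, M i j • c j = f i := by
  have hbij : Function.Bijective fun c : ι → E => M • c :=
    (M.isUnit_iff_isUnit_det.2 hM).smul_bijective
  simpa only [funext_iff, Matrix.Module.smul_apply] using hbij.existsUnique f

end LinearAlgebra

lemma sgLevel_zero : sgLevel 0 = {0} := by
  simp [sgLevel]

lemma sgLevel_of_neg {n : ℤ} (hn : n < 0) : sgLevel n = ∅ :=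
  if_pos hn

lemma mem_sgLevel_succ {n : ℕ} {t : ℝ} :
    t ∈ sgLevel (n + 1 : ℕ) ↔ ∃ j : ℤ, |j| ≤ 2 ^ n ∧ t = j / 2 ^ n := by
  have hneg : ¬ ((n + 1 : ℕ) : ℤ) < 0 := by lia
  have hne : ((n + 1 : ℕ) : ℤ) ≠ 0 := by lia
  have hexp : (1 : ℤ) - (n + 1 : ℕ) = -n := by lia
  rw [sgLevel, if_neg hneg, if_neg hne, hexp]
  simp [div_eq_inv_mul]

lemma monotone_sgLevel : Monotone fun n : ℕ => sgLevel n := by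
  refine monotone_nat_of_le_succ fun n t ht => mem_sgLevel_succ.2 ?_
  cases n with
  | zero =>
    obtain rfl : t = 0 := by simpa [sgLevel_zero] using ht
    exact ⟨0, by simp⟩
  | succ n =>
    obtain ⟨j, hj, rfl⟩ := mem_sgLevel_succ.1 ht
    refine ⟨2 * j, ?_, ?_⟩
    · rw [abs_mul, abs_two, pow_succ']
      gcongr
    · push_cast
      rw [pow_succ', mul_div_mul_left _ _ two_ne_zero]

lemma mem_sgLevel_lvl {t : ℝ} (ht : t ∈ sgLine) : t ∈ sgLevel (lvl t) := by
  obtain ⟨n, hn⟩ := Set.mem_iUnion.1 ht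
  have hn_nonneg : 0 ≤ n := by
    by_contra! hneg
    simp [sgLevel_of_neg hneg] at hn
  lift n to ℕ using hn_nonneg
  exact Nat.sInf_mem (s := {m : ℕ | t ∈ sgLevel m}) ⟨n, hn⟩

lemma mem_sgPoints_iff {d : ℕ} {p : Fin d → ℝ} : p ∈ sgPoints d ↔ ∀ k, p k ∈ sgLine := by
  simp [sgPoints, tensorGrid, sgLine, Classical.skolem]

lemma hat1_self (p : ℝ) (n : ℕ) : hat1 p n p = 1 := by
  simp [hat1]

lemma hat1_eq_zero_of_mem_sgLevel {s t : ℝ} {n : ℕ} (hs : s ∈ sgLevel n) (ht : t ∈ sgLevel n)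
    (hne : t ≠ s) : hat1 s n t = 0 := by
  cases n with
  | zero =>
    simp only [Nat.cast_zero, sgLevel_zero, Set.mem_singleton_iff] at hs ht
    exact absurd (ht.trans hs.symm) hne
  | succ n =>
    obtain ⟨i, -, rfl⟩ := mem_sgLevel_succ.1 hs
    obtain ⟨j, -, rfl⟩ := mem_sgLevel_succ.1 ht
    have hji : j ≠ i := by
      rintro rfl
      exact hne rfl
    have hspacing : (1 : ℝ) ≤ 2 ^ n * |(j : ℝ) / 2 ^ n - i / 2 ^ n| :=
      calc (1 : ℝ) ≤ |(j : ℝ) - i| := by exact_mod_cast Int.one_le_abs (sub_ne_zero.2 hji)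
        _ = 2 ^ n * |(j : ℝ) / 2 ^ n - i / 2 ^ n| := by
          rw [← sub_div, abs_div, abs_of_pos (by positivity : (0 : ℝ) < 2 ^ n)]
          field_simp
    simpa [hat1] using hspacing

lemma hat1_lvl_eq_zero {s t : ℝ} (hs : s ∈ sgLine) (ht : t ∈ sgLine) (hle : lvl t ≤ lvl s)
    (hne : t ≠ s) : hat1 s (lvl s) t = 0 :=
  hat1_eq_zero_of_mem_sgLevel (mem_sgLevel_lvl hs)
    (monotone_sgLevel hle (mem_sgLevel_lvl ht)) hne

lemma hierHat_self (d : ℕ) (p : Fin d → ℝ) : hierHat d p p = 1 := by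
  simp [hierHat, hat1_self]

lemma exists_ne_and_lvl_le {d : ℕ} {p q : Fin d → ℝ} (hne : p ≠ q)
    (hle : totalLevel p ≤ totalLevel q) : ∃ k, p k ≠ q k ∧ lvl (p k) ≤ lvl (q k) := by
  by_contra! hlt
  obtain ⟨k, hk⟩ := Function.ne_iff.1 hne
  refine hle.not_gt (Finset.sum_lt_sum (fun i _ => ?_) ⟨k, Finset.mem_univ k, hlt k hk⟩)
  obtain hi | hi := eq_or_ne (p i) (q i)
  · rw [hi]
  · exact (hlt i hi).le

lemma hierHat_eq_zero_of_totalLevel_le {d : ℕ} {p q : Fin d → ℝ} (hp : p ∈ sgPoints d)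
    (hq : q ∈ sgPoints d) (hne : p ≠ q) (hle : totalLevel p ≤ totalLevel q) :
    hierHat d q p = 0 := by
  obtain ⟨k, hk, hlvl⟩ := exists_ne_and_lvl_le hne hle
  exact Finset.prod_eq_zero (Finset.mem_univ k)
    (hat1_lvl_eq_zero (mem_sgPoints_iff.1 hq k) (mem_sgPoints_iff.1 hp k) hlvl hk)

lemma det_hierHatMatrix {d : ℕ} {P : Finset (Fin d → ℝ)} (hP : ↑P ⊆ sgPoints d) :
    (hierHatMatrix P).det = 1 := by
  have hlower (p q : P) (hne : p ≠ q) (hle : totalLevel p.1 ≤ totalLevel q.1) :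
      hierHatMatrix P p q = 0 :=
    hierHat_eq_zero_of_totalLevel_le (hP p.2) (hP q.2) (Subtype.coe_ne_coe.2 hne) hle
  rw [det_eq_prod_diag_of_forall_le_eq_zero (fun p : P => totalLevel p.1) hlower]
  exact Finset.prod_eq_one fun p _ => hierHat_self d p

theorem hierHat_interpolation_exists_unique_general {d : ℕ} {P : Finset (Fin d → ℝ)}
    (hP : ↑P ⊆ sgPoints d) {E : Type*} [AddCommGroup E] [Module ℝ E] (f : P → E) :
    ∃! c : P → E, ∀ p : P, ∑ q : P, hierHat d q p • c q = f p :=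
  existsUnique_sum_smul_eq_of_isUnit_det
    (M := hierHatMatrix P) (det_hierHatMatrix hP ▸ isUnit_one) f

/-- For every finite subset `P* ⊆ Φ` and every function `f : P* → ℂ`, there exist unique
coefficients `(c_{p'})_{p' ∈ P*}` such that `Σ_{p' ∈ P*} c_{p'} φ_{p'}(p) = f(p)` for all
`p ∈ P*`: the piecewise-linear interpolant in the span of the hierarchical hat functions
exists and is unique. -/
theorem hierHat_interpolation_exists_unique (d : ℕ) (P : Finset (Fin d → ℝ))
    (hP : ↑P ⊆ sgPoints d) (f : (Fin d → ℝ) → ℂ) :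
    ∃! c : {x // x ∈ P} → ℂ,
      ∀ p ∈ P, ∑ p' ∈ P.attach, c p' * (hierHat d (p' : Fin d → ℝ) p : ℂ) = f p := by
  simpa [mul_comm] using
    hierHat_interpolation_exists_unique_general hP fun p : P => f p
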